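/- Exact entropy identity for the randomized encoding: fix a matrix M ∈ F_2^{q×m}. Let X be a random variable on F_2^m with an arbitrary distribution, let R be uniform on F_2^{mq} and S uniform on F_2^{q(m−1)}, with X, R, S mutually independent. Then H(RE_M(X; R, S)) = mq + q(m−1) + H(MX), where H denotes Shannon entropy in bits. -/

import Mathlib

open Finset

/-- Boundary-extended horizontal mask: `sBext m s i k` is the 1-based `s_{i,k}`
for `k ∈ {1,…,m-1}`, with the boundary convention `s_{i,0} = s_{i,m} = 0`. -/
def sBext (m : ℕ) {q : ℕ} (s : Fin q → Fin (m - 1) → ZMod 2) (i : Fin q) (k : ℕ) :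
    ZMod 2 :=
  if h : 1 ≤ k ∧ k ≤ m - 1 then s i ⟨k - 1, by omega⟩ else 0

/-- `REw x r j i` is the output bit `w_{j+1,i}` (1-based column `j+1`, `w`-index
`i ∈ {0,…,q-1}`): `w_{j,0} = x_j ⊕ r_{j,1}` and `w_{j,i} = r_{j,i} ⊕ r_{j,i+1}`;
here `r j i` denotes `r_{j+1,i+1}` in the 1-based notation. -/
def REw {m q : ℕ} (x : Fin m → ZMod 2) (r : Fin m → Fin q → ZMod 2) :
    Fin m → Fin q → ZMod 2 :=
  fun j i =>
    (if (i : ℕ) = 0 then x j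
      else r j ⟨(i : ℕ) - 1, Nat.lt_of_le_of_lt (Nat.sub_le _ _) i.isLt⟩) + r j i

/-- `REz M r s i j` is the output bit `z_{i+1,j+1}` (1-based):
`z_{i,j} = s_{i,j-1} ⊕ s_{i,j} ⊕ M_{i,j}·r_{j,i}`. -/
def REz {m q : ℕ} (M : Fin q → Fin m → ZMod 2) (r : Fin m → Fin q → ZMod 2)
    (s : Fin q → Fin (m - 1) → ZMod 2) : Fin q → Fin m → ZMod 2 :=
  fun i j => sBext m s i (j : ℕ) + sBext m s i ((j : ℕ) + 1) + M i j * r j i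

/-- `aFun w j i = w_{j,0} ⊕ ⋯ ⊕ w_{j,i}` (0-based `i : Fin q`), i.e. the prefix
parity `a_{j,i+1}` in the 1-based notation of the paper. -/
def aFun {m q : ℕ} (w : Fin m → Fin q → ZMod 2) (j : Fin m) (i : Fin q) : ZMod 2 :=
  ∑ k ∈ Finset.Iic i, w j k

/-- The product of two probability mass functions (joint distribution of a pair
of independent random variables). -/
noncomputable def pmfProd {α β : Type*} (p : PMF α) (p' : PMF β) : PMF (α × β) :=
  p.bind fun a => p'.map fun b => (a, b)

/-- Shannon entropy in bits of a probability mass function on a finite type,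
with the convention `0·log₂ 0 = 0`. -/
noncomputable def shannonEntropy {α : Type*} [Fintype α] (p : PMF α) : ℝ :=
  -∑ a, ((p a).toReal * Real.logb 2 (p a).toReal)

/-!
From `(w, z)` one recovers the prefix parities `a` of `w`, which are `r` shifted by `x`, and then
the bits `z_{i,j} + M_{i,j} a_{j,i} = s_{i,j-1} + s_{i,j} + M_{i,j} x_j`. Their prefix sums along
row `i` telescope to `s_{i,k}` shifted by a function of `x`, except for the total sum, which is
`(M x)_i`. These linear coordinates on the output are injective, so they preserve entropy, and in
them the encoding is a one-time pad applied to a function of `x`, next to `M x` in the clear. Hence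
the masked part is uniform and independent of `M X`, and the two entropies add.
-/

section ShannonEntropy

variable {α β γ δ : Type*}

lemma pmfProd_apply (p : PMF α) (p' : PMF β) (a : α) (b : β) :
    pmfProd p p' (a, b) = p a * p' b := by
  classical
  have map_mk_apply (a' : α) :
      p'.map (fun b' => (a', b')) (a, b) = if a' = a then p' b else 0 := by
    rcases eq_or_ne a' a with rfl | h
    · simp [PMF.map_apply]
    · simp [PMF.map_apply, h, h.symm]
  simp [pmfProd, map_mk_apply]

lemma pmfProd_uniformOfFintype [Fintype α] [Fintype β] [Nonempty α] [Nonempty β] :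
    pmfProd (PMF.uniformOfFintype α) (PMF.uniformOfFintype β) = PMF.uniformOfFintype (α × β) := by
  ext ⟨a, b⟩
  simp [pmfProd_apply, ENNReal.mul_inv]

lemma map_uniformOfFintype_equiv [Fintype α] [Fintype β] [Nonempty α] [Nonempty β] (e : α ≃ β) :
    (PMF.uniformOfFintype α).map e = PMF.uniformOfFintype β := by
  classical
  ext b
  simp [PMF.map_apply, ← e.symm_apply_eq, Fintype.card_congr e]

lemma map_pmfProd_of_forall_map_eq (p : PMF α) {p' : PMF β} {ν : PMF γ} {σ : α → β → γ}
    (hσ : ∀ a, p'.map (σ a) = ν) (f : α → δ) :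
    (pmfProd p p').map (fun ab => (σ ab.1 ab.2, f ab.1)) = pmfProd ν (p.map f) := by
  calc (pmfProd p p').map (fun ab => (σ ab.1 ab.2, f ab.1))
      = p.bind fun a => (p'.map (σ a)).map fun c => (c, f a) := by
        simp only [pmfProd, PMF.map_bind, PMF.map_comp, Function.comp_def]
    _ = p.bind fun a => ν.bind fun c => PMF.pure (c, f a) := by
        simp only [hσ, ← PMF.bind_pure_comp, Function.comp_def]
    _ = pmfProd ν (p.map f) := by
        rw [PMF.bind_comm]
        simp only [pmfProd, PMF.map_comp]
        simp only [← PMF.bind_pure_comp, Function.comp_def]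

lemma sum_toReal_pmf [Fintype α] (p : PMF α) : ∑ a, (p a).toReal = 1 := by
  rw [← ENNReal.toReal_sum fun a _ => p.apply_ne_top a, ← tsum_fintype (L := .unconditional _),
    p.tsum_coe, ENNReal.toReal_one]

lemma shannonEntropy_eq_sum_negMulLog [Fintype α] (p : PMF α) :
    shannonEntropy p = (∑ a, Real.negMulLog (p a).toReal) / Real.log 2 := by
  simp [shannonEntropy, Real.negMulLog, Real.logb, sum_div, mul_div_assoc, neg_div]

lemma shannonEntropy_map_of_injective [Fintype α] [Fintype β] {f : α → β}
    (hf : Function.Injective f) (p : PMF α) : shannonEntropy (p.map f) = shannonEntropy p := by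
  classical
  simp only [shannonEntropy_eq_sum_negMulLog]
  congr 1
  refine (Fintype.sum_of_injective f hf _ _ (fun b hb => ?_) fun a => ?_).symm
  · have : p.map f b = 0 := (PMF.apply_eq_zero_iff _ _).2 fun h => by
      obtain ⟨a, -, ha⟩ := (PMF.mem_support_map_iff _ _ _).1 h
      exact hb ⟨a, ha⟩
    simp [this]
  · simp [PMF.map_apply, hf.eq_iff]

lemma shannonEntropy_pmfProd [Fintype α] [Fintype β] (p : PMF α) (p' : PMF β) :
    shannonEntropy (pmfProd p p') = shannonEntropy p + shannonEntropy p' := by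
  simp only [shannonEntropy_eq_sum_negMulLog, ← add_div]
  congr 1
  simp only [Fintype.sum_prod_type, pmfProd_apply, ENNReal.toReal_mul, Real.negMulLog_mul,
    sum_add_distrib, ← sum_mul, ← mul_sum, sum_toReal_pmf, one_mul]

lemma shannonEntropy_uniformOfFintype [Fintype α] [Nonempty α] :
    shannonEntropy (PMF.uniformOfFintype α) = Real.logb 2 (Fintype.card α) := by
  simp [shannonEntropy]

end ShannonEntropy

section PrefixSums

lemma eq_of_forall_sum_Iic_eq {ι A : Type*} [PartialOrder ι] [LocallyFiniteOrderBot ι]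
    [WellFoundedLT ι] [AddCancelCommMonoid A] {f g : ι → A}
    (h : ∀ i, ∑ k ∈ Iic i, f k = ∑ k ∈ Iic i, g k) : f = g := by
  funext i
  induction i using WellFoundedLT.induction with
  | ind i ih =>
    have hlt : ∑ k ∈ Iio i, f k = ∑ k ∈ Iio i, g k :=
      sum_congr rfl fun k hk => ih k (mem_Iio.1 hk)
    have hi := h i
    rw [← add_sum_Iio_eq_sum_Iic, ← add_sum_Iio_eq_sum_Iic, hlt] at hi
    exact add_right_cancel hi

lemma eq_of_sum_Iic_castLE_eq_of_sum_eq {A : Type*} [AddCancelCommMonoid A] {m : ℕ}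
    {f g : Fin m → A}
    (hprefix : ∀ k : Fin (m - 1), ∑ j ∈ Iic (k.castLE (m.sub_le 1)), f j =
      ∑ j ∈ Iic (k.castLE (m.sub_le 1)), g j)
    (htotal : ∑ j, f j = ∑ j, g j) : f = g := by
  refine eq_of_forall_sum_Iic_eq fun i => ?_
  by_cases hi : (i : ℕ) < m - 1
  · exact hprefix ⟨i, hi⟩
  · have hIic : Iic i = univ := by
      ext j
      simp only [mem_Iic, mem_univ, iff_true, Fin.le_def]
      omega
    rwa [hIic]

variable {R : Type*} [Ring R] [CharP R 2] {n : ℕ}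

lemma sum_Iic_castSucc_add_succ (g : Fin (n + 1) → R) (a : Fin n) :
    ∑ i ∈ Iic a, (g i.castSucc + g i.succ) = g 0 + g a.succ := by
  simpa only [CharTwo.sub_eq_add, add_comm] using Fin.sum_Iic_sub a g

lemma sum_castSucc_add_succ (g : Fin (n + 1) → R) :
    ∑ i : Fin n, (g i.castSucc + g i.succ) = g 0 + g (Fin.last n) := by
  cases n with
  | zero => simp [CharTwo.add_self_eq_zero]
  | succ n => simpa [← Fin.top_eq_last] using sum_Iic_castSucc_add_succ g (Fin.last n)

end PrefixSums

section Encoding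

variable {m q : ℕ}

lemma aFun_REw (x : Fin m → ZMod 2) (r : Fin m → Fin q → ZMod 2) (j : Fin m) (i : Fin q) :
    aFun (REw x r) j i = x j + r j i := by
  let column : Fin (q + 1) → ZMod 2 := Fin.cons (x j) (r j)
  have hREw (k : Fin q) : REw x r j k = column k.castSucc + column k.succ := by
    rcases k with ⟨_ | k, hk⟩ <;> rfl
  calc aFun (REw x r) j i = ∑ k ∈ Iic i, (column k.castSucc + column k.succ) :=
        sum_congr rfl fun k _ => hREw k
    _ = x j + r j i := sum_Iic_castSucc_add_succ column i

lemma aFun_injective :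
    Function.Injective (aFun : (Fin m → Fin q → ZMod 2) → Fin m → Fin q → ZMod 2) :=
  fun _ _ h => funext fun j => eq_of_forall_sum_Iic_eq fun i => congrFun (congrFun h j) i

lemma sBext_zero (s : Fin q → Fin (m - 1) → ZMod 2) (i : Fin q) : sBext m s i 0 = 0 := by
  simp [sBext]

lemma sBext_self (s : Fin q → Fin (m - 1) → ZMod 2) (i : Fin q) : sBext m s i m = 0 :=
  dif_neg (by omega)

lemma sBext_val_add_one (s : Fin q → Fin (m - 1) → ZMod 2) (i : Fin q) (k : Fin (m - 1)) :
    sBext m s i (k + 1) = s i k :=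
  dif_pos ⟨by omega, by omega⟩

/-- The bits `z_{i,j} + M_{i,j} a_{j,i}`, with `a` the prefix parities of `w`: the output `z` with
the contribution of the mask `r` cancelled. -/
def unmaskedProduct (M : Fin q → Fin m → ZMod 2)
    (c : (Fin m → Fin q → ZMod 2) × (Fin q → Fin m → ZMod 2)) : Fin q → Fin m → ZMod 2 :=
  fun i j => c.2 i j + M i j * aFun c.1 j i

lemma unmaskedProduct_encoding (M : Fin q → Fin m → ZMod 2) (x : Fin m → ZMod 2)
    (r : Fin m → Fin q → ZMod 2) (s : Fin q → Fin (m - 1) → ZMod 2) (i : Fin q) (j : Fin m) :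
    unmaskedProduct M (REw x r, REz M r s) i j =
      (sBext m s i j + sBext m s i (j + 1)) + M i j * x j := by
  simp only [unmaskedProduct, REz, aFun_REw]
  linear_combination CharTwo.add_self_eq_zero (M i j * r j i)

lemma sum_Iic_unmaskedProduct_encoding (M : Fin q → Fin m → ZMod 2) (x : Fin m → ZMod 2)
    (r : Fin m → Fin q → ZMod 2) (s : Fin q → Fin (m - 1) → ZMod 2) (i : Fin q) (j : Fin m) :
    ∑ k ∈ Iic j, unmaskedProduct M (REw x r, REz M r s) i k =
      sBext m s i (j + 1) + ∑ k ∈ Iic j, M i k * x k := by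
  have htelescope := sum_Iic_castSucc_add_succ (fun k : Fin (m + 1) => sBext m s i k) j
  simp only [Fin.val_castSucc, Fin.val_succ, Fin.val_zero, sBext_zero, zero_add] at htelescope
  simp only [unmaskedProduct_encoding, sum_add_distrib (g := fun k => M i k * x k), htelescope]

lemma sum_unmaskedProduct_encoding (M : Fin q → Fin m → ZMod 2) (x : Fin m → ZMod 2)
    (r : Fin m → Fin q → ZMod 2) (s : Fin q → Fin (m - 1) → ZMod 2) (i : Fin q) :
    ∑ j, unmaskedProduct M (REw x r, REz M r s) i j = ∑ j, M i j * x j := by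
  have htelescope := sum_castSucc_add_succ (fun k : Fin (m + 1) => sBext m s i k)
  simp only [Fin.val_castSucc, Fin.val_succ, Fin.val_zero, Fin.val_last, sBext_zero, sBext_self,
    zero_add] at htelescope
  simp only [unmaskedProduct_encoding, sum_add_distrib (g := fun k => M i k * x k), htelescope,
    zero_add]

/-- Linear coordinates on outputs `(w, z)` that separate the masks from the message: the prefix
parities of `w`, the proper prefix sums of the rows of `unmaskedProduct M (w, z)`, and, as the last
component, the total sums of these rows. -/
def outputCoords (M : Fin q → Fin m → ZMod 2)
    (c : (Fin m → Fin q → ZMod 2) × (Fin q → Fin m → ZMod 2)) :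
    ((Fin m → Fin q → ZMod 2) × (Fin q → Fin (m - 1) → ZMod 2)) × (Fin q → ZMod 2) :=
  ((aFun c.1, fun i k => ∑ j ∈ Iic (k.castLE (m.sub_le 1)), unmaskedProduct M c i j),
    fun i => ∑ j, unmaskedProduct M c i j)

lemma outputCoords_injective (M : Fin q → Fin m → ZMod 2) :
    Function.Injective (outputCoords M) := by
  rintro ⟨w, z⟩ ⟨w', z'⟩ h
  simp only [outputCoords, Prod.mk.injEq] at h
  obtain ⟨⟨ha, hprefix⟩, htotal⟩ := h
  obtain rfl : w = w' := aFun_injective ha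
  have hproduct (i : Fin q) : unmaskedProduct M (w, z) i = unmaskedProduct M (w, z') i :=
    eq_of_sum_Iic_castLE_eq_of_sum_eq (congrFun (congrFun hprefix i)) (congrFun htotal i)
  have hz : z = z' := funext₂ fun i j => add_right_cancel (congrFun (hproduct i) j)
  rw [hz]

/-- The shift by which the input `x` displaces the masks `(r, s)` in `outputCoords`. -/
def maskShift (M : Fin q → Fin m → ZMod 2) (x : Fin m → ZMod 2) :
    (Fin m → Fin q → ZMod 2) × (Fin q → Fin (m - 1) → ZMod 2) :=
  (fun j _ => x j, fun i k => ∑ j ∈ Iic (k.castLE (m.sub_le 1)), M i j * x j)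

lemma outputCoords_encoding (M : Fin q → Fin m → ZMod 2) (x : Fin m → ZMod 2)
    (rs : (Fin m → Fin q → ZMod 2) × (Fin q → Fin (m - 1) → ZMod 2)) :
    outputCoords M (REw x rs.1, REz M rs.1 rs.2) =
      (rs + maskShift M x, fun i => ∑ j, M i j * x j) := by
  refine Prod.ext (Prod.ext ?_ ?_) ?_
  · funext j i
    exact (aFun_REw x rs.1 j i).trans (add_comm _ _)
  · funext i k
    exact (sum_Iic_unmaskedProduct_encoding M x rs.1 rs.2 i _).trans
      (congrArg (· + _) (sBext_val_add_one rs.2 i k))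
  · funext i
    exact sum_unmaskedProduct_encoding M x rs.1 rs.2 i

lemma logb_card_masks :
    Real.logb 2 (Fintype.card ((Fin m → Fin q → ZMod 2) × (Fin q → Fin (m - 1) → ZMod 2))) =
      (m * q : ℕ) + (q * (m - 1) : ℕ) := by
  have hcard : Fintype.card ((Fin m → Fin q → ZMod 2) × (Fin q → Fin (m - 1) → ZMod 2)) =
      2 ^ (m * q + q * (m - 1)) := by
    simp [ZMod.card, pow_add, ← pow_mul, mul_comm]
  rw [hcard, Nat.cast_pow, Nat.cast_ofNat, Real.logb_pow, Real.logb_self_eq_one one_lt_two,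
    mul_one, Nat.cast_add]

end Encoding

/-- Exact entropy identity for the randomized encoding: with
`X` arbitrary on `F_2^m`, `R` uniform on `F_2^{mq}`, `S` uniform on
`F_2^{q(m−1)}`, mutually independent,
`H(RE_M(X; R, S)) = mq + q(m−1) + H(MX)`. -/
theorem entropy_identity {m q : ℕ} (hm : 1 ≤ m) (hq : 1 ≤ q)
    (M : Fin q → Fin m → ZMod 2) (μ : PMF (Fin m → ZMod 2)) :
    shannonEntropy
        ((pmfProd μ (pmfProd (PMF.uniformOfFintype (Fin m → Fin q → ZMod 2))
              (PMF.uniformOfFintype (Fin q → Fin (m - 1) → ZMod 2)))).map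
          (fun xrs => (REw xrs.1 xrs.2.1, REz M xrs.2.1 xrs.2.2)))
      = (m * q : ℕ) + (q * (m - 1) : ℕ) +
          shannonEntropy (μ.map fun x => fun i : Fin q => ∑ j, M i j * x j) := by
  rw [← shannonEntropy_map_of_injective (outputCoords_injective M), PMF.map_comp,
    pmfProd_uniformOfFintype]
  simp only [Function.comp_def, outputCoords_encoding]
  have hpad (x : Fin m → ZMod 2) :
      (PMF.uniformOfFintype _).map (fun rs => rs + maskShift M x) = PMF.uniformOfFintype _ :=
    map_uniformOfFintype_equiv (Equiv.addRight (maskShift M x))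
  rw [map_pmfProd_of_forall_map_eq μ hpad fun x i => ∑ j, M i j * x j, shannonEntropy_pmfProd,
    shannonEntropy_uniformOfFintype, logb_card_masks]
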